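/- arXiv:2309.01267 — 5 statements merged into one kernel-verified Lean document; each statement's English description precedes it below -/
import Mathlib

section
/- Finite-horizon reach-avoid guarantee from an Isaacs certificate (Proposition 3.1, certificate form). Suppose V : ℕ → Z → ℝ and a time-varying ego policy π : ℕ → Z → Ue satisfy: (i) for every z, V 0 z ≤ min (g z) (ℓ z); and (ii) for every k ∈ ℕ, every z ∈ Z, every uo ∈ Û z, every w ∈ W and every v ∈ Vn, V (k+1) z ≤ min (g z) (max (ℓ z) (V k (F z (π k z) uo w v))). Fix N ∈ ℕ and z₀ ∈ Z with V N z₀ ≥ 0. Then for all sequences uo : ℕ → Uo, w : ℕ → W, v : ℕ → Vn, defining the closed-loop trajectory z : ℕ → Z by z 0 = z₀ and z (t+1) = F (z t) (π (N - 1 - t) (z t)) (uo t) (w t) (v t), if uo t ∈ Û (z t) for every t < N, then there exists t ≤ N such that ℓ (z t) ≥ 0 and g (z s) ≥ 0 for all s ≤ t. -/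
/-!
The certificate stays nonnegative along the closed loop until the target is reached. With `k + 1`
steps to go at time `t`, the policy in force is `π (N - 1 - t) = π k`, so the Isaacs inequality
turns `0 ≤ V (k + 1) (z t)` into `0 ≤ g (z t)` together with `0 ≤ ℓ (z t)` or
`0 ≤ V k (z (t + 1))`. With no step left, `V 0 ≤ min g ℓ` forces the target to be reached safely.
-/

/-- Finite-horizon reach-avoid guarantee from an Isaacs certificate
(Proposition 3.1, certificate form). -/
theorem reach_avoid_of_isaacs_certificate
    {Z Ue Uo W Vn : Type*}
    (F : Z → Ue → Uo → W → Vn → Z) (g ℓ : Z → ℝ) (Ub : Z → Set Uo)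
    (V : ℕ → Z → ℝ) (π : ℕ → Z → Ue)
    (hV0 : ∀ z, V 0 z ≤ min (g z) (ℓ z))
    (hVstep : ∀ (k : ℕ) (z : Z), ∀ uo ∈ Ub z, ∀ (w : W) (v : Vn),
      V (k + 1) z ≤ min (g z) (max (ℓ z) (V k (F z (π k z) uo w v))))
    (N : ℕ) (z₀ : Z) (hinit : V N z₀ ≥ 0)
    (uo : ℕ → Uo) (w : ℕ → W) (v : ℕ → Vn)
    (z : ℕ → Z) (hz0 : z 0 = z₀)
    (hzstep : ∀ t : ℕ,
      z (t + 1) = F (z t) (π (N - 1 - t) (z t)) (uo t) (w t) (v t))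
    (huo : ∀ t < N, uo t ∈ Ub (z t)) :
    ∃ t ≤ N, ℓ (z t) ≥ 0 ∧ ∀ s ≤ t, g (z s) ≥ 0 := by
  -- Induction on the number `k = N - t` of remaining steps.
  have key : ∀ k t : ℕ, t + k = N → 0 ≤ V k (z t) → (∀ s < t, 0 ≤ g (z s)) →
      ∃ t ≤ N, ℓ (z t) ≥ 0 ∧ ∀ s ≤ t, g (z s) ≥ 0 := by
    intro k
    induction k with
    | zero =>
      intro t ht hV hg
      obtain ⟨h1, h2⟩ := le_min_iff.mp (hV.trans (hV0 (z t)))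
      refine ⟨t, by omega, h2, fun s hs => ?_⟩
      rcases hs.lt_or_eq with h | rfl
      · exact hg s h
      · exact h1
    | succ k ih =>
      intro t ht hV hg
      have hstep := hVstep k (z t) (uo t) (huo t (by omega)) (w t) (v t)
      have hk : N - 1 - t = k := by omega
      have hz := hzstep t
      rw [hk] at hz
      rw [← hz] at hstep
      obtain ⟨h1, h2⟩ := le_min_iff.mp (hV.trans hstep)
      have hg' : ∀ s ≤ t, 0 ≤ g (z s) := by
        intro s hs
        rcases hs.lt_or_eq with h | rfl
        · exact hg s h
        · exact h1
      rcases le_max_iff.mp h2 with h | h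
      · exact ⟨t, by omega, h, hg'⟩
      · exact ih (t + 1) (by omega) h fun s hs => hg' s (by omega)
  exact key N 0 (by omega) (by rw [hz0]; exact hinit) fun s hs => by omega
end

section
/- Finite-horizon reach-avoid guarantee via value iteration (Proposition 3.1, value-iteration form). Define V : ℕ → Z → ℝ by V 0 z = min (g z) (ℓ z) and V (k+1) z = (T (V k)) z, where T is the reach-avoid Isaacs operator. Then for every N ∈ ℕ and every z₀ ∈ Z with V N z₀ ≥ 0, there exists a time-varying ego policy π : ℕ → Z → Ue such that for all sequences uo : ℕ → Uo, w : ℕ → W, v : ℕ → Vn, defining the closed-loop trajectory z : ℕ → Z by z 0 = z₀ and z (t+1) = F (z t) (π t (z t)) (uo t) (w t) (v t), if uo t ∈ Û (z t) for every t < N, then there exists t ≤ N with ℓ (z t) ≥ 0 and g (z s) ≥ 0 for all s ≤ t. -/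
/-!
The value `V k z` is nonnegative only if `g z ≥ 0` and either `ℓ z ≥ 0` or some ego control keeps
`V (k - 1)` nonnegative at every successor allowed by the inferred bound; the supremum is attained
because `Ue` is finite (`exists_control_of_iSup_nonneg`). The policy plays such a control for the
number of remaining steps, so along the closed loop `V (N - t) (z t) ≥ 0` persists until the target
is reached, at the latest when `V 0 = min g ℓ` is nonnegative.
-/

/-- A nonnegative max-min value yields a control securing nonnegativity against every admissible
response. In `ℝ` the inner infimum over the empty proposition `uo ∈ S` is `0`, so the bounded
infimum over `uo ∈ S` may be truncated at `0`; this does not affect its being nonnegative. -/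
theorem exists_control_of_iSup_nonneg {Ue Uo W Vn : Type*}
    [Finite Ue] [Nonempty Ue] [Finite Uo] [Finite W] [Finite Vn]
    (S : Set Uo) (f : Ue → Uo → W → Vn → ℝ)
    (h : 0 ≤ ⨆ ue : Ue, ⨅ uo ∈ S, ⨅ w : W, ⨅ v : Vn, f ue uo w v) :
    ∃ ue, ∀ uo ∈ S, ∀ w v, 0 ≤ f ue uo w v := by
  obtain ⟨ue, hue⟩ := exists_eq_ciSup_of_finite
    (f := fun ue : Ue => ⨅ uo ∈ S, ⨅ w : W, ⨅ v : Vn, f ue uo w v)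
  refine ⟨ue, fun uo huo w v => ?_⟩
  rw [← hue] at h
  calc (0 : ℝ) ≤ ⨅ uo ∈ S, ⨅ w : W, ⨅ v : Vn, f ue uo w v := h
    _ ≤ ⨅ _ : uo ∈ S, ⨅ w : W, ⨅ v : Vn, f ue uo w v :=
        ciInf_le (Set.finite_range _).bddBelow uo
    _ = ⨅ w : W, ⨅ v : Vn, f ue uo w v := ciInf_pos huo
    _ ≤ ⨅ v : Vn, f ue uo w v := ciInf_le (Set.finite_range _).bddBelow w
    _ ≤ f ue uo w v := ciInf_le (Set.finite_range _).bddBelow v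

/-- Finite-horizon reach-avoid guarantee via value iteration
(Proposition 3.1, value-iteration form). -/
theorem reach_avoid_of_value_iteration
    {Z Ue Uo W Vn : Type*}
    [Fintype Ue] [Nonempty Ue] [Fintype Uo] [Nonempty Uo]
    [Fintype W] [Nonempty W] [Fintype Vn] [Nonempty Vn]
    (F : Z → Ue → Uo → W → Vn → Z) (g ℓ : Z → ℝ) (Ub : Z → Set Uo)
    (hUb : ∀ z, (Ub z).Nonempty)
    (V : ℕ → Z → ℝ)
    (hV0 : ∀ z, V 0 z = min (g z) (ℓ z))
    (hVstep : ∀ (k : ℕ) (z : Z),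
      V (k + 1) z = min (g z) (max (ℓ z)
        (⨆ ue : Ue, ⨅ uo ∈ Ub z, ⨅ w : W, ⨅ v : Vn, V k (F z ue uo w v))))
    (N : ℕ) (z₀ : Z) (hinit : V N z₀ ≥ 0) :
    ∃ π : ℕ → Z → Ue,
      ∀ (uo : ℕ → Uo) (w : ℕ → W) (v : ℕ → Vn) (z : ℕ → Z),
        z 0 = z₀ →
        (∀ t : ℕ, z (t + 1) = F (z t) (π t (z t)) (uo t) (w t) (v t)) →
        (∀ t < N, uo t ∈ Ub (z t)) →
        ∃ t ≤ N, ℓ (z t) ≥ 0 ∧ ∀ s ≤ t, g (z s) ≥ 0 := by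
  have hctrl : ∀ (k : ℕ) (z : Z), ∃ ue : Ue, 0 ≤ V (k + 1) z → ℓ z < 0 →
      ∀ uo ∈ Ub z, ∀ w v, 0 ≤ V k (F z ue uo w v) := by
    intro k z
    by_cases h : 0 ≤ V (k + 1) z ∧ ℓ z < 0
    · obtain ⟨hV, hl⟩ := h
      rw [hVstep, le_min_iff, le_max_iff] at hV
      obtain ⟨ue, hue⟩ := exists_control_of_iSup_nonneg (Ub z)
        (fun ue uo w v => V k (F z ue uo w v)) (hV.2.resolve_left (not_le.mpr hl))
      exact ⟨ue, fun _ _ => hue⟩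
    · exact ⟨Classical.arbitrary Ue, fun h₁ h₂ => absurd ⟨h₁, h₂⟩ h⟩
  choose c hc using hctrl
  -- At time `t < N` there are `N - t = (N - 1 - t) + 1` steps to go.
  refine ⟨fun t => c (N - 1 - t), fun uo w v z hz0 hz huo => ?_⟩
  have key : ∀ k t : ℕ, t + k = N → 0 ≤ V k (z t) →
      ∃ t', t ≤ t' ∧ t' ≤ N ∧ 0 ≤ ℓ (z t') ∧ ∀ s, t ≤ s → s ≤ t' → 0 ≤ g (z s) := by
    intro k
    induction k with
    | zero =>
      intro t ht hV
      rw [hV0, le_min_iff] at hV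
      refine ⟨t, le_rfl, by omega, hV.2, fun s h₁ h₂ => ?_⟩
      rw [le_antisymm h₂ h₁]
      exact hV.1
    | succ k ih =>
      intro t ht hV
      have hg : 0 ≤ g (z t) := by
        rw [hVstep, le_min_iff] at hV
        exact hV.1
      by_cases hl : 0 ≤ ℓ (z t)
      · refine ⟨t, le_rfl, by omega, hl, fun s h₁ h₂ => ?_⟩
        rw [le_antisymm h₂ h₁]
        exact hg
      · have hnext : 0 ≤ V k (z (t + 1)) := by
          have hk : N - 1 - t = k := by omega
          rw [hz t]
          beta_reduce
          rw [hk]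
          exact hc k (z t) hV (not_le.mp hl) _ (huo t (by omega)) _ _
        obtain ⟨t', h₁, h₂, h₃, h₄⟩ := ih (t + 1) (by omega) hnext
        refine ⟨t', by omega, h₂, h₃, fun s hs hs' => ?_⟩
        rcases hs.eq_or_lt with rfl | hlt
        · exact hg
        · exact h₄ s hlt hs'
  obtain ⟨t, _, htN, hl, hg⟩ := key N 0 (Nat.zero_add N) (by rw [hz0]; exact hinit)
  exact ⟨t, htN, hl, fun s hs => hg s (Nat.zero_le s) hs⟩
end

section
/- Infinite-horizon safety invariance and recursive feasibility. Suppose V : Z → ℝ and a stationary ego policy π : Z → Ue satisfy: (i) V z ≤ g z for every z; and (ii) for every z ∈ Z, every uo ∈ Û z, every w ∈ W and v ∈ Vn, V z ≤ max (ℓ z) (V (F z (π z) uo w v)). Let z₀ ∈ Z with V z₀ ≥ 0, and let z : ℕ → Z be any closed-loop trajectory with z 0 = z₀ and z (t+1) = F (z t) (π (z t)) (uo t) (w t) (v t), where uo t ∈ Û (z t) for all t. Then for every t ∈ ℕ, if ℓ (z s) < 0 for all s < t, then V (z t) ≥ 0 and g (z t) ≥ 0; i.e., until the target set is reached, the system remains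 in the value superlevel set and outside the failure set. -/
/-- Infinite-horizon safety invariance and recursive feasibility. -/
theorem safety_invariance_of_certificate
    {Z Ue Uo W Vn : Type*}
    (F : Z → Ue → Uo → W → Vn → Z) (g ℓ : Z → ℝ) (Ub : Z → Set Uo)
    (V : Z → ℝ) (π : Z → Ue)
    (hVg : ∀ z, V z ≤ g z)
    (hVstep : ∀ z : Z, ∀ uo ∈ Ub z, ∀ (w : W) (v : Vn),
      V z ≤ max (ℓ z) (V (F z (π z) uo w v)))
    (z₀ : Z) (hinit : V z₀ ≥ 0)
    (uo : ℕ → Uo) (w : ℕ → W) (v : ℕ → Vn)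
    (z : ℕ → Z) (hz0 : z 0 = z₀)
    (hzstep : ∀ t : ℕ, z (t + 1) = F (z t) (π (z t)) (uo t) (w t) (v t))
    (huo : ∀ t : ℕ, uo t ∈ Ub (z t)) :
    ∀ t : ℕ, (∀ s < t, ℓ (z s) < 0) → V (z t) ≥ 0 ∧ g (z t) ≥ 0 := by
  intro t ht
  suffices hV : 0 ≤ V (z t) from ⟨hV, hV.trans (hVg _)⟩
  induction t with
  | zero => rw [hz0]; exact hinit
  | succ t ih =>
    have hVt : 0 ≤ V (z t) := ih fun s hs => ht s (hs.trans t.lt_succ_self)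
    have hmax := hVstep (z t) (uo t) (huo t) (w t) (v t)
    rw [← hzstep t] at hmax
    -- Before the target is reached `ℓ (z t) < 0`, so the maximum is attained by the successor value.
    exact (le_max_iff.mp (hVt.trans hmax)).resolve_left (ht t t.lt_succ_self).not_ge
end

section
/- Deceptive opponent guarantee (dual of Proposition 3.1). Suppose V : ℕ → Z → ℝ and opponent strategies σu : ℕ → Z → Ue → Uo, σw : ℕ → Z → Ue → W, σv : ℕ → Z → Ue → Vn satisfy: (i) σu k z ue ∈ Û z for all k, z, ue; (ii) V 0 z ≥ min (g z) (ℓ z) for every z; and (iii) for every k, z, and ue ∈ Ue, V (k+1) z ≥ min (g z) (max (ℓ z) (V k (F z ue (σu k z ue) (σw k z ue) (σv k z ue)))). Fix N ∈ ℕ and z₀ ∈ Z with V N z₀ < 0. Then for every ego action sequence ue : ℕ → Ue, the closed-loop trajectory z : ℕ → Z defined by z 0 = z₀ and z (t+1) = F (z t) (ue t) (σu (N - 1 - t) (z t) (ue t)) (σw (N - 1 - t) (z t) (ue t)) (σv (N - 1 - t) (z t) (ue t)) admits no time t ≤ N such that ℓ (z t) ≥ 0 and g (z s) ≥ 0 for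 all s ≤ t; i.e., the opponent prevents the ego agent from safely reaching the target within horizon N. -/
/-!
Along the closed-loop trajectory the value with remaining horizon, `V (N - s) (z s)`, stays
negative for as long as the ego is safe: if `g (z s) ≥ 0`, the Bellman inequality can only have a
negative left side when both `ℓ (z s)` and the next value are negative. At a time `t ≤ N` with
`ℓ (z t) ≥ 0` and `g (z t) ≥ 0`, the terminal or Bellman inequality gives `V (N - t) (z t) ≥ 0`,
a contradiction.
-/

/-- Deceptive opponent guarantee (dual of Proposition 3.1). -/
theorem opponent_prevents_reach_avoid
    {Z Ue Uo W Vn : Type*}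
    (F : Z → Ue → Uo → W → Vn → Z) (g ℓ : Z → ℝ) (Ub : Z → Set Uo)
    (V : ℕ → Z → ℝ)
    (σu : ℕ → Z → Ue → Uo) (σw : ℕ → Z → Ue → W) (σv : ℕ → Z → Ue → Vn)
    (hσu : ∀ (k : ℕ) (z : Z) (ue : Ue), σu k z ue ∈ Ub z)
    (hV0 : ∀ z, V 0 z ≥ min (g z) (ℓ z))
    (hVstep : ∀ (k : ℕ) (z : Z) (ue : Ue),
      V (k + 1) z ≥ min (g z) (max (ℓ z)
        (V k (F z ue (σu k z ue) (σw k z ue) (σv k z ue)))))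
    (N : ℕ) (z₀ : Z) (hinit : V N z₀ < 0)
    (ue : ℕ → Ue) (z : ℕ → Z) (hz0 : z 0 = z₀)
    (hzstep : ∀ t : ℕ,
      z (t + 1) = F (z t) (ue t) (σu (N - 1 - t) (z t) (ue t))
        (σw (N - 1 - t) (z t) (ue t)) (σv (N - 1 - t) (z t) (ue t))) :
    ¬ ∃ t ≤ N, ℓ (z t) ≥ 0 ∧ ∀ s ≤ t, g (z s) ≥ 0 := by
  rintro ⟨t, htN, hl, hg⟩
  -- As long as the ego stays safe, the value with the remaining horizon `N - s` stays negative.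
  have key : ∀ s ≤ t, V (N - s) (z s) < 0 := by
    intro s
    induction s with
    | zero => intro _; simpa [hz0] using hinit
    | succ s ih =>
      intro hs
      have h := (hVstep (N - 1 - s) (z s) (ue s)).le
      rw [← hzstep s, show N - 1 - s + 1 = N - s by omega] at h
      have h' := (min_lt_iff.1 (h.trans_lt (ih (by omega)))).resolve_left
        (not_lt.2 (hg s (by omega)))
      rw [show N - (s + 1) = N - 1 - s by omega]
      exact (max_lt_iff.1 h').2
  have hneg := key t le_rfl
  have hgt : 0 ≤ g (z t) := hg t le_rfl
  -- Safely reaching the target at time `t` forces a nonnegative value there.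
  refine absurd hneg (not_lt.2 ?_)
  rcases hk : N - t with _ | k
  · exact (le_min hgt hl).trans (hV0 (z t))
  · exact (le_min hgt (le_max_of_le_left hl)).trans (hVstep k (z t) (ue t))
end

section
/- Finite-time reach-avoid guarantee from a discounted Isaacs certificate. Let γ ∈ ℝ with 0 < γ < 1 and M > 0. Suppose V : Z → ℝ and a stationary ego policy π : Z → Ue satisfy: (i) V z ≤ g z for every z; (ii) V z ≤ M for every z; and (iii) for every z ∈ Z, every uo ∈ Û z, every w ∈ W and v ∈ Vn, V z ≤ max (ℓ z) (γ * V (F z (π z) uo w v)). Let z₀ ∈ Z with V z₀ > 0, and let z : ℕ → Z be any closed-loop trajectory with z 0 = z₀ and z (t+1) = F (z t) (π (z t)) (uo t) (w t) (v t), where uo t ∈ Û (z t) for all t. Then: (a) for every t ∈ ℕ, if ℓ (z s) < 0 for all s < t, then γ ^ t * V (z t) ≥ V z₀ and g (z t) ≥ 0; and (b) there exists t ∈ ℕ such that ℓ (z t) ≥ 0 and g (z s) ≥ 0 for all s ≤ t. -/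
/-! Before the target is reached, `ℓ < 0`, so the certificate inequality forces
`V (z t) ≤ γ * V (z (t + 1))` as long as `V (z t) > 0`; by induction
`V z₀ ≤ γ ^ t * V (z t)`, which keeps `V`, hence `g`, positive. If the target were never
reached, `V z₀ ≤ γ ^ t * M` for all `t`, impossible since `γ ^ t → 0`. The first hitting
time of the target therefore exists and witnesses the second claim. -/

/-- Finite-time reach-avoid guarantee from a discounted Isaacs certificate. -/
theorem reach_avoid_of_discounted_certificate
    {Z Ue Uo W Vn : Type*}
    (F : Z → Ue → Uo → W → Vn → Z) (g ℓ : Z → ℝ) (Ub : Z → Set Uo)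
    (γ : ℝ) (hγ0 : 0 < γ) (hγ1 : γ < 1) (M : ℝ) (hM : 0 < M)
    (V : Z → ℝ) (π : Z → Ue)
    (hVg : ∀ z, V z ≤ g z)
    (hVM : ∀ z, V z ≤ M)
    (hVstep : ∀ z : Z, ∀ uo ∈ Ub z, ∀ (w : W) (v : Vn),
      V z ≤ max (ℓ z) (γ * V (F z (π z) uo w v)))
    (z₀ : Z) (hinit : V z₀ > 0)
    (uo : ℕ → Uo) (w : ℕ → W) (v : ℕ → Vn)
    (z : ℕ → Z) (hz0 : z 0 = z₀)
    (hzstep : ∀ t : ℕ, z (t + 1) = F (z t) (π (z t)) (uo t) (w t) (v t))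
    (huo : ∀ t : ℕ, uo t ∈ Ub (z t)) :
    (∀ t : ℕ, (∀ s < t, ℓ (z s) < 0) →
      γ ^ t * V (z t) ≥ V z₀ ∧ g (z t) ≥ 0) ∧
    (∃ t : ℕ, ℓ (z t) ≥ 0 ∧ ∀ s ≤ t, g (z s) ≥ 0) := by
  have growth : ∀ t : ℕ, (∀ s < t, ℓ (z s) < 0) → V z₀ ≤ γ ^ t * V (z t) := by
    intro t
    induction t with
    | zero => intro _; simp [hz0]
    | succ t ih =>
      intro h
      have h1 := ih fun s hs => h s (by omega)
      have hpos : 0 < V (z t) :=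
        pos_of_mul_pos_right (hinit.trans_le h1) (pow_pos hγ0 t).le
      have h2 := hVstep (z t) (uo t) (huo t) (w t) (v t)
      rw [← hzstep t] at h2
      -- `ℓ (z t) < 0 < V (z t)`, so the maximum is attained by the discounted term.
      have h3 : V (z t) ≤ γ * V (z (t + 1)) := by
        rcases le_max_iff.mp h2 with h4 | h4
        · linarith [h t (by omega)]
        · exact h4
      calc V z₀ ≤ γ ^ t * V (z t) := h1
        _ ≤ γ ^ t * (γ * V (z (t + 1))) :=
          mul_le_mul_of_nonneg_left h3 (pow_pos hγ0 t).le
        _ = γ ^ (t + 1) * V (z (t + 1)) := by ring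
  have safe : ∀ t : ℕ, (∀ s < t, ℓ (z s) < 0) → 0 ≤ g (z t) := fun t h =>
    (pos_of_mul_pos_right (hinit.trans_le (growth t h)) (pow_pos hγ0 t).le).le.trans
      (hVg (z t))
  refine ⟨fun t h => ⟨growth t h, safe t h⟩, ?_⟩
  have hex : ∃ t, 0 ≤ ℓ (z t) := by
    by_contra! hneg
    obtain ⟨n, hn⟩ := exists_pow_lt_of_lt_one (div_pos hinit hM) hγ1
    rw [lt_div_iff₀ hM] at hn
    have h1 := growth n fun s _ => hneg s
    have h2 := mul_le_mul_of_nonneg_left (hVM (z n)) (pow_pos hγ0 n).le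
    linarith
  classical
  -- At the first hitting time, every `s ≤ t` has `ℓ < 0` strictly before it.
  exact ⟨Nat.find hex, Nat.find_spec hex, fun s hs =>
    safe s fun r hr => not_le.mp (Nat.find_min hex (hr.trans_le hs))⟩
end
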